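/- Let E be a real normed vector space, let Δt > 0 and N ≥ 1 an integer, set tⁿ = n·Δt for 0 ≤ n ≤ N, and let f : ℝ → E be twice continuously differentiable on [0, N·Δt + Δt/2]. For each 0 ≤ n ≤ N−1 let Mₙ = sup_{s ∈ [tⁿ, tⁿ + Δt/2]} ‖f''(s)‖. Then Δt · Σ_{n=0}^{N−1} ‖(1/2)·f'(tⁿ) − (f(tⁿ + Δt/2) − f(tⁿ))/Δt‖² ≤ (Δt³/64) · Σ_{n=0}^{N−1} Mₙ². (Estimate (53n): the accumulated predictor consistency error Δt·Σₙ‖(1/2)u_t^n − (u^{n̄+1} − u^n)/Δt‖² is bounded by (Δt²/64) times the discrete L²-in-time norm of u_tt.) -/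

import Mathlib

/-!
By the sharp Taylor bound, the difference quotient of `f` over a step of length `h` differs from
the derivative at the base point by at most `h / 2` times the supremum of `‖f''‖` over the step.
The predictor error is half of this error for `h = Δt / 2`, hence at most `Mₙ * Δt / 8`.
-/

open Set
open scoped Nat

section TaylorRemainder

variable {E : Type*} [NormedAddCommGroup E] [NormedSpace ℝ E]

theorem norm_image_sub_le_of_norm_deriv_le_mul_sub_pow {g g' : ℝ → E} {a b K : ℝ} (n : ℕ)
    (hab : a ≤ b) (hg : ∀ t ∈ Icc a b, HasDerivWithinAt g (g' t) (Icc a b) t)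
    (bound : ∀ t ∈ Ico a b, ‖g' t‖ ≤ K * (b - t) ^ n) :
    ‖g b - g a‖ ≤ K * (b - a) ^ (n + 1) / (n + 1) := by
  let B : ℝ → ℝ := fun t => K / (n + 1) * ((b - a) ^ (n + 1) - (b - t) ^ (n + 1))
  have hB (t : ℝ) : HasDerivAt B (K * (b - t) ^ n) t := by
    refine (((monomial_has_deriv_aux t b n).const_sub _).const_mul _).congr_deriv ?_
    field_simp
  calc ‖g b - g a‖
      ≤ B b :=
        image_norm_le_of_norm_deriv_right_le_deriv_boundary (f := fun t => g t - g a)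
          (fun t ht => ((hg t ht).sub_const _).continuousWithinAt)
          (fun t ht => ((hg t (Ico_subset_Icc_self ht)).sub_const _).mono_of_mem_nhdsWithin
            (Icc_mem_nhdsGE_of_mem ht))
          (by simp [B]) hB bound (right_mem_Icc.2 hab)
    _ = K * (b - a) ^ (n + 1) / (n + 1) := by
        simp only [B, sub_self, zero_pow n.succ_ne_zero, sub_zero]
        ring

variable {f : ℝ → E} {s : Set ℝ} {x₀ x C : ℝ}

/-- Unlike in `taylor_mean_remainder_bound`, the constant `1 / (n + 1)!` is sharp: the derivative of
the Taylor polynomial in its base point `t` is bounded by `C * |x - t| ^ n / n !`, which is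
integrated exactly instead of being replaced by its maximum. -/
theorem norm_sub_taylorWithinEval_le {n : ℕ} (hs : UniqueDiffOn ℝ s) (hf : ContDiffOn ℝ n f s)
    (hf' : DifferentiableOn ℝ (iteratedDerivWithin n f s) s) (hsub : uIcc x₀ x ⊆ s)
    (hC : ∀ y ∈ uIcc x₀ x, ‖iteratedDerivWithin (n + 1) f s y‖ ≤ C) :
    ‖f x - taylorWithinEval f n s x₀ x‖ ≤ C * |x - x₀| ^ (n + 1) / (n + 1)! := by
  let γ : ℝ → ℝ := AffineMap.lineMap x₀ x
  have hγ : MapsTo γ (Icc 0 1) (uIcc x₀ x) := fun θ hθ => by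
    rw [← segment_eq_uIcc, segment_eq_image_lineMap]
    exact mem_image_of_mem _ hθ
  have sub_γ (θ : ℝ) : x - γ θ = (1 - θ) * (x - x₀) := by
    simp only [γ, AffineMap.lineMap_apply_module, smul_eq_mul]
    ring
  let T : ℝ → E := fun θ => taylorWithinEval f n s (γ θ) x
  let T' : ℝ → E := fun θ =>
    (x - x₀) • ((n ! : ℝ)⁻¹ * (x - γ θ) ^ n) • iteratedDerivWithin (n + 1) f s (γ θ)
  have hT : ∀ θ ∈ Icc (0 : ℝ) 1, HasDerivWithinAt T (T' θ) (Icc 0 1) θ := fun θ hθ =>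
    (hasDerivWithinAt_taylorWithinEval hs self_mem_nhdsWithin (hsub (hγ hθ)) subset_rfl hf
      (hf' _ (hsub (hγ hθ)))).scomp θ AffineMap.hasDerivWithinAt_lineMap (hγ.mono_right hsub)
  have hT' : ∀ θ ∈ Ico (0 : ℝ) 1, ‖T' θ‖ ≤ C * |x - x₀| ^ (n + 1) / n ! * (1 - θ) ^ n := by
    intro θ hθ
    have hθ' : 0 ≤ 1 - θ := sub_nonneg.2 hθ.2.le
    calc ‖T' θ‖
        = |x - x₀| ^ (n + 1) / n ! * (1 - θ) ^ n * ‖iteratedDerivWithin (n + 1) f s (γ θ)‖ := by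
          simp only [T', sub_γ, norm_smul, norm_mul, norm_inv, norm_pow, Real.norm_eq_abs,
            Nat.abs_cast, abs_of_nonneg hθ', mul_pow]
          ring
      _ ≤ |x - x₀| ^ (n + 1) / n ! * (1 - θ) ^ n * C := by
          gcongr
          exact hC _ (hγ (Ico_subset_Icc_self hθ))
      _ = C * |x - x₀| ^ (n + 1) / n ! * (1 - θ) ^ n := by ring
  calc ‖f x - taylorWithinEval f n s x₀ x‖
      = ‖T 1 - T 0‖ := by simp [T, γ]
    _ ≤ C * |x - x₀| ^ (n + 1) / n ! * (1 - 0) ^ (n + 1) / (n + 1) :=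
        norm_image_sub_le_of_norm_deriv_le_mul_sub_pow n zero_le_one hT hT'
    _ = C * |x - x₀| ^ (n + 1) / (n + 1)! := by
        rw [Nat.factorial_succ, Nat.cast_mul, Nat.cast_succ]
        field_simp
        rw [sub_zero, one_pow, mul_one]

end TaylorRemainder

section DifferenceQuotient

variable {E : Type*} [NormedAddCommGroup E] [NormedSpace ℝ E] {f : ℝ → E} {s : Set ℝ} {x y : ℝ}

theorem norm_derivWithin_sub_slope_le {C : ℝ} (hs : UniqueDiffOn ℝ s) (hf : DifferentiableOn ℝ f s)
    (hf' : DifferentiableOn ℝ (derivWithin f s) s) (hxy : x ≠ y) (hsub : uIcc x y ⊆ s)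
    (hC : ∀ z ∈ uIcc x y, ‖iteratedDerivWithin 2 f s z‖ ≤ C) :
    ‖derivWithin f s x - slope f x y‖ ≤ C * |y - x| / 2 := by
  have hyx : y - x ≠ 0 := sub_ne_zero.2 hxy.symm
  have hf_one : ContDiffOn ℝ 1 f s :=
    (contDiffOn_one_iff_derivWithin hs).2 ⟨hf, hf'.continuousOn⟩
  have taylor_one : taylorWithinEval f 1 s x y = f x + (y - x) • derivWithin f s x := by
    simp
  have remainder_le : ‖f y - taylorWithinEval f 1 s x y‖ ≤ C * |y - x| ^ 2 / 2 := by
    simpa using norm_sub_taylorWithinEval_le (n := 1) hs (mod_cast hf_one)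
      (by rwa [iteratedDerivWithin_one]) hsub hC
  have slope_error : derivWithin f s x - slope f x y =
      -((y - x)⁻¹ • (f y - taylorWithinEval f 1 s x y)) := by
    rw [taylor_one, slope_def_module, ← sub_sub, smul_sub _ (f y - f x), inv_smul_smul₀ hyx,
      neg_sub]
  calc ‖derivWithin f s x - slope f x y‖
      = |y - x|⁻¹ * ‖f y - taylorWithinEval f 1 s x y‖ := by
        rw [slope_error, norm_neg, norm_smul, norm_inv, Real.norm_eq_abs]
    _ ≤ |y - x|⁻¹ * (C * |y - x| ^ 2 / 2) := by gcongr
    _ = C * |y - x| / 2 := by field_simp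

theorem norm_derivWithin_sub_slope_le_iSup (hs : UniqueDiffOn ℝ s) (hf : ContDiffOn ℝ 2 f s)
    (hxy : x ≠ y) (hsub : uIcc x y ⊆ s) :
    ‖derivWithin f s x - slope f x y‖ ≤
      (⨆ z : uIcc x y, ‖iteratedDerivWithin 2 f s z‖) * |y - x| / 2 := by
  have hcont : ContinuousOn (fun z => ‖iteratedDerivWithin 2 f s z‖) (uIcc x y) :=
    (hf.continuousOn_iteratedDerivWithin le_rfl hs).norm.mono hsub
  have hf' : DifferentiableOn ℝ (derivWithin f s) s :=
    (hf.derivWithin hs (m := 1) (by norm_num)).differentiableOn one_ne_zero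
  refine norm_derivWithin_sub_slope_le hs (hf.differentiableOn two_ne_zero) hf' hxy hsub ?_
  intro z hz
  rw [← sSup_image' (f := fun z => ‖iteratedDerivWithin 2 f s z‖)]
  exact hcont.le_sSup_image_Icc hz

theorem norm_half_derivWithin_sub_halfStep_le_iSup {h : ℝ} (hs : UniqueDiffOn ℝ s)
    (hf : ContDiffOn ℝ 2 f s) (hh : 0 < h) (hsub : Icc x (x + h / 2) ⊆ s) :
    ‖(2 : ℝ)⁻¹ • derivWithin f s x - h⁻¹ • (f (x + h / 2) - f x)‖ ≤
      (⨆ z : Icc x (x + h / 2), ‖iteratedDerivWithin 2 f s z‖) * h / 8 := by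
  have hlt : x < x + h / 2 := lt_add_of_pos_right x (half_pos hh)
  have half_slope_error : (2 : ℝ)⁻¹ • derivWithin f s x - h⁻¹ • (f (x + h / 2) - f x) =
      (2 : ℝ)⁻¹ • (derivWithin f s x - slope f x (x + h / 2)) := by
    rw [slope_def_module, add_sub_cancel_left]
    module
  have slope_error_le := norm_derivWithin_sub_slope_le_iSup hs hf hlt.ne
    (by rwa [uIcc_of_le hlt.le])
  rw [uIcc_of_le hlt.le, add_sub_cancel_left, abs_of_pos (half_pos hh)] at slope_error_le
  rw [half_slope_error, norm_smul, Real.norm_of_nonneg (by norm_num)]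
  linarith

end DifferenceQuotient

/-- Estimate (53n): accumulated predictor consistency error
`Δt·Σ_{n<N} ‖(1/2)f'(tⁿ) − (f(tⁿ+Δt/2) − f(tⁿ))/Δt‖² ≤ (Δt³/64)·Σ_{n<N} Mₙ²`,
where `Mₙ = sup_{s ∈ [tⁿ, tⁿ+Δt/2]} ‖f''(s)‖`. -/
theorem stmt_16 {E : Type*} [NormedAddCommGroup E] [NormedSpace ℝ E]
    (Δt : ℝ) (hΔt : 0 < Δt) (N : ℕ) (hN : 1 ≤ N) (f : ℝ → E)
    (hf : ContDiffOn ℝ 2 f (Set.Icc 0 ((N : ℝ) * Δt + Δt / 2)))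
    (M : ℕ → ℝ)
    (hM : ∀ n < N, M n =
        ⨆ s : Set.Icc ((n : ℝ) * Δt) ((n : ℝ) * Δt + Δt / 2),
          ‖iteratedDerivWithin 2 f (Set.Icc 0 ((N : ℝ) * Δt + Δt / 2)) (s : ℝ)‖) :
    Δt * ∑ n ∈ Finset.range N,
        ‖(2:ℝ)⁻¹ • derivWithin f (Set.Icc 0 ((N : ℝ) * Δt + Δt / 2)) ((n : ℝ) * Δt)
          - Δt⁻¹ • (f ((n : ℝ) * Δt + Δt / 2) - f ((n : ℝ) * Δt))‖ ^ 2
      ≤ Δt ^ 3 / 64 * ∑ n ∈ Finset.range N, (M n) ^ 2 := by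
  set T : ℝ := (N : ℝ) * Δt + Δt / 2
  have hT : UniqueDiffOn ℝ (Icc 0 T) := uniqueDiffOn_Icc (by positivity)
  rw [Finset.mul_sum, Finset.mul_sum]
  refine Finset.sum_le_sum fun n hn => ?_
  have hnN : n < N := Finset.mem_range.1 hn
  have hsub : Icc ((n : ℝ) * Δt) (n * Δt + Δt / 2) ⊆ Icc 0 T :=
    Icc_subset_Icc (by positivity) (by simp only [T]; gcongr)
  have step_error_le := norm_half_derivWithin_sub_halfStep_le_iSup hT hf hΔt hsub
  rw [← hM n hnN] at step_error_le
  calc _ ≤ Δt * (M n * Δt / 8) ^ 2 := by gcongr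
    _ = Δt ^ 3 / 64 * M n ^ 2 := by ring
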